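/- For all integers n ≥ 1 and k ≥ 0 one has (in ℤ): D⁺(n,k) = k·R⁺(n−1,k) + (n−2k+1)·R⁺(n−1,k−1) + D(n−1,k), where terms with second argument −1 vanish. -/

import Mathlib

/-!
Deleting `±n` from a signed simsun permutation of rank `n` leaves one of rank `N = n - 1`, so the
permutations of rank `n` arise uniquely by inserting `n` or `-n` into a simsun `π` of rank `N`, and
the result is simsun iff it has no double descent (`insertTop_bijective`, `isSimsun_insertTop`).
Being even-signed forces the letter: `n` if `π` is even-signed, `-n` otherwise.

Let `d` be the number of descents of `π`. If `π(1) > 0` (or `N = 0`) and the first letter has to stay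
positive, then
* inserting `n` keeps `d` in `d + 1` ways and raises it to `d + 1` in `N - 2d` ways
  (`sum_insert_max`);
* inserting `-n` keeps `d` in `d` ways and raises it to `d + 1` in `N - 2d` ways
  (`sum_insert_min`).

If `π(1) < 0`, the only possibility is to insert `n` in front, and this keeps `d`. So every `π` with
`π(1) > 0` contributes `d` to descent number `d` and `N - 2d` to descent number `d + 1`, and every
even-signed `π`, whatever the sign of `π(1)`, contributes one more to `d`. Summing over `π` gives the
recurrence. The counting is done on lists, with an arbitrary weight `h` of the descent number in
place of a fixed `k`, so that the induction on the list can shift the descent number.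
-/

open Finset

/-- A signed permutation of rank `n`, encoded as an (unsigned) permutation of
`Fin n` together with a choice of sign for each position: the entry
`π(i+1)` of the word is `±(σ(i)+1)` where the sign is `-` iff `sgn i = true`. -/
abbrev SignedPerm (n : ℕ) := Equiv.Perm (Fin n) × (Fin n → Bool)

/-- The entry `π(j+1)` of the word of a signed permutation. -/
def entry {n : ℕ} (π : SignedPerm n) (j : Fin n) : ℤ :=
  (if π.2 j then -1 else 1) * (((π.1 j : ℕ) : ℤ) + 1)

/-- The word `π(0)π(1)⋯π(n)` of a signed permutation (with the leading `0`). -/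
def word {n : ℕ} (π : SignedPerm n) : List ℤ :=
  0 :: List.ofFn (entry π)

/-- `π(i)` for `0 ≤ i ≤ n` (and `0` outside this range). -/
def wordFn {n : ℕ} (π : SignedPerm n) (i : ℕ) : ℤ :=
  if h : 1 ≤ i ∧ i ≤ n then entry π ⟨i - 1, by omega⟩ else 0

/-- A word has no double descent: no three consecutive strictly decreasing entries. -/
def noDD : List ℤ → Bool
  | a :: b :: c :: rest => (!(decide (b < a) && decide (c < b))) && noDD (b :: c :: rest)
  | _ => true

/-- A signed permutation is simsun if for every `0 ≤ k ≤ n`, deleting the entries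
`±n, …, ±(n-k+1)` (i.e. keeping the entries of absolute value `≤ m := n - k`) from the
word `π(0)π(1)⋯π(n)` leaves a word with no three consecutive strictly decreasing
entries. -/
def IsSimsun {n : ℕ} (π : SignedPerm n) : Prop :=
  ∀ m ≤ n, noDD ((word π).filter (fun a => a.natAbs ≤ m)) = true

instance {n : ℕ} : DecidablePred (IsSimsun (n := n)) := fun _ => by
  unfold IsSimsun; infer_instance

/-- The type-B descent number `des_B(π) = #{0 ≤ i ≤ n-1 : π(i) > π(i+1)}`. -/
def desB {n : ℕ} (π : SignedPerm n) : ℕ :=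
  ((Finset.range n).filter (fun i => wordFn π (i + 1) < wordFn π i)).card

/-- The set of signed simsun permutations of rank `n`. -/
def RB (n : ℕ) : Finset (SignedPerm n) := univ.filter IsSimsun

/-- Signed simsun permutations with `π(1) > 0` (for `n = 0`, the empty permutation
is included, following the convention `R⁺_0 = 1`). -/
def RBp (n : ℕ) : Finset (SignedPerm n) :=
  (RB n).filter (fun π => 0 < wordFn π 1 ∨ n = 0)

/-- Signed simsun permutations with `π(1) < 0`. -/
def RBm (n : ℕ) : Finset (SignedPerm n) :=
  (RB n).filter (fun π => wordFn π 1 < 0)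

/-- A signed permutation is even-signed if its word has an even number of negative entries. -/
def IsEvenSigned {n : ℕ} (π : SignedPerm n) : Prop :=
  (univ.filter (fun j => π.2 j = true)).card % 2 = 0

instance {n : ℕ} : DecidablePred (IsEvenSigned (n := n)) := fun _ => by
  unfold IsEvenSigned; infer_instance

def RD (n : ℕ) : Finset (SignedPerm n) := (RB n).filter IsEvenSigned
def RT (n : ℕ) : Finset (SignedPerm n) := (RB n).filter (fun π => ¬ IsEvenSigned π)
def RDp (n : ℕ) : Finset (SignedPerm n) := (RD n).filter (fun π => 0 < wordFn π 1 ∨ n = 0)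
def RDm (n : ℕ) : Finset (SignedPerm n) := (RD n).filter (fun π => wordFn π 1 < 0)
def RTp (n : ℕ) : Finset (SignedPerm n) := (RT n).filter (fun π => 0 < wordFn π 1 ∨ n = 0)
def RTm (n : ℕ) : Finset (SignedPerm n) := (RT n).filter (fun π => wordFn π 1 < 0)

/-- `R(n,k)`, as an integer, vanishing for `k < 0`. -/
def Rcnt (n : ℕ) (k : ℤ) : ℤ := ((RB n).filter (fun π => (desB π : ℤ) = k)).card
def Rpcnt (n : ℕ) (k : ℤ) : ℤ := ((RBp n).filter (fun π => (desB π : ℤ) = k)).card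
def Rmcnt (n : ℕ) (k : ℤ) : ℤ := ((RBm n).filter (fun π => (desB π : ℤ) = k)).card
def Dcnt (n : ℕ) (k : ℤ) : ℤ := ((RD n).filter (fun π => (desB π : ℤ) = k)).card
def Tcnt (n : ℕ) (k : ℤ) : ℤ := ((RT n).filter (fun π => (desB π : ℤ) = k)).card
def Dpcnt (n : ℕ) (k : ℤ) : ℤ := ((RDp n).filter (fun π => (desB π : ℤ) = k)).card
def Dmcnt (n : ℕ) (k : ℤ) : ℤ := ((RDm n).filter (fun π => (desB π : ℤ) = k)).card
def Tpcnt (n : ℕ) (k : ℤ) : ℤ := ((RTp n).filter (fun π => (desB π : ℤ) = k)).card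
def Tmcnt (n : ℕ) (k : ℤ) : ℤ := ((RTm n).filter (fun π => (desB π : ℤ) = k)).card

/-! ### Descents of words and insertion of an extreme letter -/

/-- The number of descents of the nonempty word `a :: l`. -/
def desL : ℤ → List ℤ → ℕ
  | _, [] => 0
  | a, b :: t => (if b < a then 1 else 0) + desL b t

/-- The default value `b` of `headD` makes the second condition false when `t` is empty. -/
lemma noDD_cons (a b : ℤ) (t : List ℤ) :
    noDD (a :: b :: t) = true ↔ ¬ (b < a ∧ t.headD b < b) ∧ noDD (b :: t) = true := by
  cases t with
  | nil => simp [noDD]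
  | cons c r => simp [noDD, imp_iff_not_or]

lemma desL_cons_headD (a : ℤ) (l : List ℤ) (x : ℤ) (hx : ¬ l.headD x < x)
    (ha : ¬ l.headD a < a) : desL x l = desL a l := by
  cases l with
  | nil => rfl
  | cons b t =>
    simp only [List.headD_cons] at hx ha
    simp [desL, hx, ha]

lemma headD_insertIdx (t : List ℤ) (p : ℕ) (x b : ℤ) :
    (t.insertIdx p x).headD b = if p = 0 then x else t.headD b := by
  cases p <;> cases t <;> simp

/-- Inserting a maximal letter `M` into `a :: l` (anywhere after `a`) without creating a double
descent: `d + 1` insertions keep the number `d` of descents (into a descent, or at the end), and the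
insertions into an ascent not followed by a descent raise it by one. -/
lemma sum_insert_max (M : ℤ) (l : List ℤ) : ∀ (a : ℤ) (h : ℕ → ℤ), (∀ x ∈ l, x < M) → a < M →
    noDD (a :: l) = true →
    ∑ p ∈ range (l.length + 1),
      (if noDD (a :: l.insertIdx p M) = true then h (desL a (l.insertIdx p M)) else 0) =
    ((desL a l : ℤ) + 1) * h (desL a l) +
      ((l.length : ℤ) - 2 * desL a l + (if l.headD a < a then 1 else 0)) * h (desL a l + 1) := by
  induction l with
  | nil =>
    intro a h _ ha _
    simp [noDD, desL, not_lt.2 ha.le]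
  | cons b t ih =>
    intro a h hl ha hn
    have hb : b < M := hl b (by simp)
    have ht : ∀ x ∈ t, x < M := fun x hx => hl x (by simp [hx])
    obtain ⟨h1, h2⟩ := (noDD_cons a b t).1 hn
    have key := ih b (fun j => h ((if b < a then 1 else 0) + j)) ht hb h2
    rw [List.length_cons, sum_range_succ']
    have e : ∀ p ∈ range (t.length + 1),
        (if noDD (a :: (b :: t).insertIdx (p + 1) M) = true
          then h (desL a ((b :: t).insertIdx (p + 1) M)) else 0) =
        (if noDD (b :: t.insertIdx p M) = true
          then h ((if b < a then 1 else 0) + desL b (t.insertIdx p M)) else 0) := by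
      intro p _
      have : ¬ (b < a ∧ (t.insertIdx p M).headD b < b) := by
        rw [headD_insertIdx]
        split_ifs
        · rintro ⟨_, h⟩; exact absurd h (not_lt.2 hb.le)
        · exact h1
      simp only [List.insertIdx_succ_cons, noDD_cons, this, not_false_iff, true_and, desL]
    rw [sum_congr rfl e, key]
    simp only [List.insertIdx_zero, noDD_cons, desL, List.headD_cons, not_lt.2 ha.le,
      not_false_iff, true_and, hb, if_true, if_false, h2, and_true]
    by_cases hab : b < a
    · have h3 : ¬ t.headD b < b := fun h => h1 ⟨hab, h⟩
      simp only [hab, h3, if_true, if_false, not_false_iff]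
      push_cast
      rw [show 1 + desL b t + 1 = 1 + (desL b t + 1) by ring]
      simp only [zero_add]
      ring
    · by_cases h3 : t.headD b < b
      · simp only [hab, h3, if_true, if_false, not_true]
        push_cast
        simp only [zero_add]
        ring
      · simp only [hab, h3, if_true, if_false, not_false_iff]
        push_cast
        rw [show 0 + (1 + desL b t) = desL b t + 1 by ring]
        simp only [zero_add]
        ring

/-- Inserting a minimal letter `m` into `a :: l`, but not directly after `a`, without creating a
double descent. Insertion into a descent keeps the number of descents; insertion into an ascent, or
at the end, raises it by one and is allowed when no descent precedes that place. -/
lemma sum_insert_min (m : ℤ) (l : List ℤ) : ∀ (a : ℤ) (h : ℕ → ℤ), (∀ x ∈ l, m < x) →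
    noDD (a :: l) = true →
    ∑ p ∈ range l.length,
      (if noDD (a :: l.insertIdx (p + 1) m) = true then h (desL a (l.insertIdx (p + 1) m)) else 0) =
    ((desL a l : ℤ) - (if l.headD a < a then 1 else 0)) * h (desL a l) +
      ((l.length : ℤ) - 2 * desL a l + (if l.headD a < a then 1 else 0)) * h (desL a l + 1) := by
  induction l with
  | nil =>
    intro a h _ _
    simp [desL]
  | cons b t ih =>
    intro a h hl hn
    have hb : m < b := hl b (by simp)
    have ht : ∀ x ∈ t, m < x := fun x hx => hl x (by simp [hx])
    obtain ⟨h1, h2⟩ := (noDD_cons a b t).1 hn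
    have key := ih b (fun j => h ((if b < a then 1 else 0) + j)) ht h2
    have hm : ¬ t.headD m < m := by
      cases t with
      | nil => simp
      | cons c r => simpa using (ht c (by simp)).le
    have hm2 : noDD (m :: t) = true := by
      cases t with
      | nil => simp [noDD]
      | cons c r =>
        have := ((noDD_cons b c r).1 h2).2
        rw [noDD_cons]
        exact ⟨fun h => hm (by simpa using h.1), this⟩
    rw [List.length_cons, sum_range_succ']
    have e : ∀ p ∈ range t.length,
        (if noDD (a :: (b :: t).insertIdx (p + 1 + 1) m) = true
          then h (desL a ((b :: t).insertIdx (p + 1 + 1) m)) else 0) =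
        (if noDD (b :: t.insertIdx (p + 1) m) = true
          then h ((if b < a then 1 else 0) + desL b (t.insertIdx (p + 1) m)) else 0) := by
      intro p _
      have : ¬ (b < a ∧ (t.insertIdx (p + 1) m).headD b < b) := by
        rw [headD_insertIdx, if_neg (Nat.succ_ne_zero p)]
        exact h1
      simp only [List.insertIdx_succ_cons, noDD_cons, this, not_false_iff, true_and, desL]
    rw [sum_congr rfl e, key]
    simp only [zero_add, List.insertIdx_succ_cons, List.insertIdx_zero, noDD_cons, desL,
      List.headD_cons, hb, hm2, and_true, if_true]
    by_cases hab : b < a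
    · have h3 : ¬ t.headD b < b := fun h => h1 ⟨hab, h⟩
      simp only [hab, h3, if_true, if_false, not_true, false_and]
      push_cast
      rw [show 1 + desL b t + 1 = 1 + (desL b t + 1) by ring]
      ring
    · simp only [hab, if_false, not_false_iff, true_and, zero_add]
      by_cases h3 : t.headD b < b
      · have h4 : desL b t = 1 + desL m t := by
          cases t with
          | nil => simp at h3
          | cons c r =>
            have h5 : c < b := by simpa using h3
            have h6 : ¬ c < m := by simpa using hm
            simp [desL, h5, h6]
        simp only [h3, hm, if_true, not_false_iff, ← h4]
        push_cast
        ring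
      · rw [desL_cons_headD b t m hm h3]
        simp only [h3, hm, if_true, if_false, not_false_iff]
        rw [add_comm 1 (desL b t)]
        push_cast
        ring

/-! ### Signed permutations of rank `N + 1` as insertions into rank `N` -/

/-- Insert the letter `N + 1` (if `s = false`) or `-(N + 1)` (if `s = true`) at position `p` of the
word of `π`, for `(π, p, s)` the given triple. -/
def insertTop {N : ℕ} (q : SignedPerm N × Fin (N + 1) × Bool) : SignedPerm (N + 1) :=
  ((finSuccEquiv' q.2.1).trans
    ((Equiv.optionCongr q.1.1).trans (finSuccEquiv' (Fin.last N)).symm),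
    Fin.insertNth (α := fun _ => Bool) q.2.1 q.2.2 q.1.2)

lemma insertTop_fst_self {N : ℕ} (π : SignedPerm N) (p : Fin (N + 1)) (s : Bool) :
    (insertTop (π, p, s)).1 p = Fin.last N := by
  simp [insertTop]

lemma insertTop_fst_succAbove {N : ℕ} (π : SignedPerm N) (p : Fin (N + 1)) (s : Bool) (i : Fin N) :
    (insertTop (π, p, s)).1 (p.succAbove i) = (π.1 i).castSucc := by
  simp [insertTop]

lemma insertTop_injective {N : ℕ} : Function.Injective (insertTop (N := N)) := by
  rintro ⟨π, p, s⟩ ⟨π', p', s'⟩ h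
  have hp : p = p' := by
    have h1 := insertTop_fst_self π p s
    have h2 := insertTop_fst_self π' p' s'
    rw [← h] at h2
    exact (insertTop (π, p, s)).1.injective (h1.trans h2.symm)
  subst hp
  have h2 : Fin.insertNth (α := fun _ => Bool) p s π.2 = Fin.insertNth p s' π'.2 :=
    congrArg Prod.snd h
  have hs : s = s' := by simpa using congrFun h2 p
  have hπ2 : π.2 = π'.2 := by
    funext i
    simpa using congrFun h2 (p.succAbove i)
  have hπ1 : π.1 = π'.1 := by
    ext i
    have h3 := insertTop_fst_succAbove π p s i
    rw [h, insertTop_fst_succAbove] at h3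
    have := congrArg Fin.val h3
    simpa using this.symm
  rw [hs, Prod.ext hπ1 hπ2]

lemma insertTop_bijective {N : ℕ} : Function.Bijective (insertTop (N := N)) := by
  rw [Fintype.bijective_iff_injective_and_card]
  refine ⟨insertTop_injective, ?_⟩
  simp only [Fintype.card_prod, Fintype.card_perm, Fintype.card_fin, Fintype.card_bool,
    Fintype.card_fun, Nat.factorial_succ]
  ring

/-- The word of `π` without its leading `0`. -/
def letters {n : ℕ} (π : SignedPerm n) : List ℤ := List.ofFn (entry π)

lemma length_letters {n : ℕ} (π : SignedPerm n) : (letters π).length = n := by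
  simp [letters]

/-- The letter of largest absolute value in rank `N + 1`, negative iff `s = true`. -/
def top (N : ℕ) (s : Bool) : ℤ := if s then -((N : ℤ) + 1) else (N : ℤ) + 1

lemma ofFn_insertNth {N : ℕ} (p : Fin (N + 1)) (x : ℤ) (f : Fin N → ℤ) :
    List.ofFn (Fin.insertNth (α := fun _ => ℤ) p x f) = (List.ofFn f).insertIdx p x := by
  apply List.ext_getElem
  · rw [List.length_insertIdx]
    simp [Nat.lt_succ_iff.1 p.2]
  · intro j h1 h2
    have hj : j < N + 1 := by simpa using h1
    rw [List.getElem_ofFn, List.getElem_insertIdx]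
    obtain h | ⟨i, hi⟩ := p.eq_self_or_eq_succAbove ⟨j, hj⟩
    · have : j = p := by rw [← h]
      rw [h]
      simp [this]
    · rw [hi, Fin.insertNth_apply_succAbove]
      have hv := congrArg Fin.val hi
      rw [Fin.succAbove] at hv
      split_ifs at hv with hlt
      · have hlt' : (i : ℕ) < p := hlt
        have hji : j = i := hv
        simp [hji, hlt']
      · have hlt' : ¬ (i : ℕ) < p := hlt
        have hji : j = i + 1 := hv
        have c1 : ¬ j < p := by omega
        have c2 : ¬ j = p := by omega
        rw [dif_neg c1, dif_neg c2]
        simp [hji]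

lemma letters_insertTop {N : ℕ} (π : SignedPerm N) (p : Fin (N + 1)) (s : Bool) :
    letters (insertTop (π, p, s)) = (letters π).insertIdx p (top N s) := by
  rw [letters, letters, ← ofFn_insertNth]
  congr 1
  funext j
  obtain h | ⟨i, hi⟩ := p.eq_self_or_eq_succAbove j
  · subst h
    rw [Fin.insertNth_apply_same, entry, insertTop_fst_self]
    cases s <;> simp [insertTop, top]
  · subst hi
    rw [Fin.insertNth_apply_succAbove, entry, entry, insertTop_fst_succAbove]
    simp [insertTop]

lemma letters_bound {n : ℕ} (π : SignedPerm n) : ∀ x ∈ letters π, x ≠ 0 ∧ x.natAbs ≤ n := by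
  intro x hx
  obtain ⟨j, rfl⟩ := (List.mem_ofFn' _ _).1 hx
  have := (π.1 j).2
  unfold entry
  split_ifs <;> omega

lemma isEvenSigned_insertTop {N : ℕ} (π : SignedPerm N) (p : Fin (N + 1)) (s : Bool) :
    IsEvenSigned (insertTop (π, p, s)) ↔ (IsEvenSigned π ↔ s = false) := by
  unfold IsEvenSigned
  rw [card_filter, card_filter, Fin.sum_univ_succAbove _ p]
  cases s <;> simp [insertTop]
  omega

lemma filter_insertIdx (l : List ℤ) (p : ℕ) (x : ℤ) (f : ℤ → Bool) (hx : f x = false) :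
    (l.insertIdx p x).filter f = l.filter f := by
  induction l generalizing p with
  | nil => cases p <;> simp [hx]
  | cons b t ih =>
    cases p with
    | zero => simp [hx]
    | succ p => simp [List.filter_cons, ih]

lemma natAbs_top (N : ℕ) (s : Bool) : (top N s).natAbs = N + 1 := by
  unfold top; split_ifs <;> omega

lemma isSimsun_noDD {n : ℕ} (π : SignedPerm n) (h : IsSimsun π) :
    noDD (0 :: letters π) = true := by
  have := h n le_rfl
  rwa [word, ← letters, List.filter_eq_self.2] at this
  intro a ha
  rcases List.mem_cons.1 ha with rfl | ha
  · simp
  · simpa using (letters_bound π a ha).2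

lemma isSimsun_insertTop {N : ℕ} (π : SignedPerm N) (p : Fin (N + 1)) (s : Bool) :
    IsSimsun (insertTop (π, p, s)) ↔
      IsSimsun π ∧ noDD (0 :: (letters π).insertIdx p (top N s)) = true := by
  have key : ∀ m ≤ N, (word (insertTop (π, p, s))).filter (fun a => a.natAbs ≤ m) =
      (word π).filter (fun a => a.natAbs ≤ m) := by
    intro m hm
    rw [word, word, ← letters, ← letters, letters_insertTop, List.filter_cons, List.filter_cons,
      filter_insertIdx]
    rw [natAbs_top]
    simp; omega
  constructor
  · intro h
    refine ⟨fun m hm => ?_, ?_⟩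
    · rw [← key m hm]; exact h m (by omega)
    · rw [← letters_insertTop]; exact isSimsun_noDD _ h
  · rintro ⟨h1, h2⟩ m hm
    rcases Nat.lt_or_ge N m with h | h
    · rw [List.filter_eq_self.2, word, ← letters, letters_insertTop]
      · exact h2
      · intro a ha
        rcases List.mem_cons.1 ha with rfl | ha
        · simp
        · have := (letters_bound _ a ha).2
          simp; omega
    · rw [key m h]; exact h1 m h

lemma desL_eq_card (l : List ℤ) (a : ℤ) : desL a l =
    ((range l.length).filter (fun i => (a :: l).getD (i + 1) 0 < (a :: l).getD i 0)).card := by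
  induction l generalizing a with
  | nil => simp [desL]
  | cons b t ih =>
    rw [desL, ih, card_filter, card_filter, List.length_cons, sum_range_succ', add_comm]
    simp

lemma wordFn_eq {n : ℕ} (π : SignedPerm n) (i : ℕ) : wordFn π i = (0 :: letters π).getD i 0 := by
  unfold wordFn
  cases i with
  | zero => simp
  | succ i =>
    by_cases h : i < n
    · simp [letters, List.getD_eq_getElem?_getD, Nat.succ_le_of_lt h]
    · have h' : ¬ (i + 1 ≤ n) := by omega
      simp [letters, List.getD_eq_getElem?_getD, h']

lemma desB_eq {n : ℕ} (π : SignedPerm n) : desB π = desL 0 (letters π) := by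
  rw [desL_eq_card, desB, length_letters]
  simp only [wordFn_eq]

/-- With default value `1`, the rank-zero convention of the positivity condition is built in. -/
lemma pos_iff {n : ℕ} (π : SignedPerm n) :
    (0 < wordFn π 1 ∨ n = 0) ↔ 0 < (letters π).headD 1 := by
  rw [wordFn_eq]
  have := length_letters π
  cases h : letters π with
  | nil => rw [h] at this; simp at this; simp [← this]
  | cons b t =>
    rw [h] at this
    simp at this
    simp
    omega

/-! ### The contribution of one signed simsun permutation of rank `N` -/

/-- Weighted count of the insertions of `N + 1` into the word `0 :: l` that create no double descent
and leave a positive first letter. If the first letter of `l` is negative, only the insertion in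
front qualifies, and it keeps the number of descents. -/
lemma sum_above_pos (N : ℕ) (l : List ℤ) (hlen : l.length = N)
    (hb : ∀ x ∈ l, x ≠ 0 ∧ x.natAbs ≤ N) (hn : noDD (0 :: l) = true) (h : ℕ → ℤ) :
    ∑ p ∈ range (N + 1), (if noDD (0 :: l.insertIdx p (top N false)) = true ∧
        0 < (l.insertIdx p (top N false)).headD 1
        then h (desL 0 (l.insertIdx p (top N false))) else 0) =
    if 0 < l.headD 1 then ((desL 0 l : ℤ) + 1) * h (desL 0 l) +
      ((N : ℤ) - 2 * desL 0 l) * h (desL 0 l + 1) else h (desL 0 l) := by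
  have hM : top N false = (N : ℤ) + 1 := by simp [top]
  rw [hM]
  simp only [headD_insertIdx]
  split_ifs with hp
  · have key := sum_insert_max ((N : ℤ) + 1) l 0 h
      (fun x hx => by have := (hb x hx).2; omega) (by omega) hn
    have h0 : ¬ l.headD 0 < 0 := by
      cases l with
      | nil => simp
      | cons b t => simp at hp ⊢; omega
    rw [hlen, if_neg h0, add_zero] at key
    rw [← key]
    refine sum_congr rfl fun p _ => ?_
    have : 0 < if p = 0 then (N : ℤ) + 1 else l.headD 1 := by
      split_ifs
      · omega
      · exact hp
    simp only [this, and_true]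
  · rw [sum_range_succ']
    -- only the insertion in front gives a positive first letter
    simp only [hp, Nat.succ_ne_zero, if_false, and_false, sum_const_zero, zero_add, if_true,
      List.insertIdx_zero]
    cases l with
    | nil => simp at hp
    | cons b t =>
      have hb0 : b < 0 := by
        have := (hb b (by simp)).1
        simp at hp; omega
      have hbN : b < (N : ℤ) + 1 := by omega
      have hN : (0 : ℤ) < (N : ℤ) + 1 := by omega
      have hN' : ¬ ((N : ℤ) + 1 < 0) := by omega
      rw [noDD_cons] at hn
      have h3 : ¬ t.headD b < b := fun h => hn.1 ⟨hb0, h⟩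
      have h4 : noDD (0 :: ((N : ℤ) + 1) :: b :: t) = true := by
        rw [noDD_cons, noDD_cons]
        exact ⟨fun h => hN' h.1, fun h => h3 h.2, hn.2⟩
      rw [if_pos ⟨h4, hN⟩]
      simp [desL, hb0, hbN, hN']

/-- The same weighted count for the letter `-(N + 1)`, which can never be inserted in front. -/
lemma sum_above_neg (N : ℕ) (l : List ℤ) (hlen : l.length = N)
    (hb : ∀ x ∈ l, x ≠ 0 ∧ x.natAbs ≤ N) (hn : noDD (0 :: l) = true) (h : ℕ → ℤ) :
    ∑ p ∈ range (N + 1), (if noDD (0 :: l.insertIdx p (top N true)) = true ∧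
        0 < (l.insertIdx p (top N true)).headD 1
        then h (desL 0 (l.insertIdx p (top N true))) else 0) =
    if 0 < l.headD 1 then (desL 0 l : ℤ) * h (desL 0 l) +
      ((N : ℤ) - 2 * desL 0 l) * h (desL 0 l + 1) else 0 := by
  have hM : top N true = -((N : ℤ) + 1) := by simp [top]
  rw [hM, sum_range_succ']
  have hN : ¬ ((0 : ℤ) < -((N : ℤ) + 1)) := by omega
  simp only [headD_insertIdx, Nat.succ_ne_zero, if_false, if_true, hN, and_false, add_zero]
  split_ifs with hp
  · have key := sum_insert_min (-((N : ℤ) + 1)) l 0 h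
      (fun x hx => by have := (hb x hx).2; omega) hn
    have h0 : ¬ l.headD 0 < 0 := by
      cases l with
      | nil => simp
      | cons b t => simp at hp ⊢; omega
    rw [hlen, if_neg h0, add_zero, sub_zero] at key
    rw [← key]
    simp only [hp, and_true]
  · simp only [hp, and_false, if_false, sum_const_zero]

lemma sum_indicator {α : Type*} (s : Finset α) (P : α → Prop) [DecidablePred P] :
    (((s.filter P).card : ℕ) : ℤ) = ∑ x ∈ s, if P x then 1 else 0 := by
  simp

/-- The recurrence with the rank written as `N + 1`: both sides are sums over the signed simsun
permutations of rank `N`, and they agree term by term. -/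
lemma Dpcnt_succ (N : ℕ) (k : ℤ) :
    Dpcnt (N + 1) k =
      k * Rpcnt N k + ((N : ℤ) + 2 - 2 * k) * Rpcnt N (k - 1) + Dcnt N k := by
  have hL : Dpcnt (N + 1) k = ∑ π : SignedPerm N, ∑ s : Bool,
      if IsSimsun π ∧ (IsEvenSigned π ↔ s = false) then
        ∑ p ∈ range (N + 1), (if noDD (0 :: (letters π).insertIdx p (top N s)) = true ∧
          0 < ((letters π).insertIdx p (top N s)).headD 1
          then (if (desL 0 ((letters π).insertIdx p (top N s)) : ℤ) = k then (1 : ℤ) else 0)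
          else 0)
      else 0 := by
    rw [Dpcnt, RDp, RD, RB, filter_filter, filter_filter, filter_filter, sum_indicator,
      ← Function.Bijective.sum_comp (insertTop_bijective (N := N)), Fintype.sum_prod_type]
    refine sum_congr rfl fun π _ => ?_
    rw [Fintype.sum_prod_type_right]
    refine sum_congr rfl fun s _ => ?_
    rw [← Fin.sum_univ_eq_sum_range (fun p =>
      if noDD (0 :: (letters π).insertIdx p (top N s)) = true ∧
          0 < ((letters π).insertIdx p (top N s)).headD 1
          then (if (desL 0 ((letters π).insertIdx p (top N s)) : ℤ) = k then (1 : ℤ) else 0)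
          else 0)]
    simp only [isSimsun_insertTop, isEvenSigned_insertTop, pos_iff, desB_eq, letters_insertTop]
    by_cases h1 : IsSimsun π <;> by_cases h2 : (IsEvenSigned π ↔ s = false) <;>
      simp [h1, h2, ite_and]
  rw [hL, Rpcnt, Rpcnt, Dcnt, RBp, RD, RB, filter_filter, filter_filter, filter_filter,
    filter_filter, filter_filter, filter_filter, sum_indicator, sum_indicator, sum_indicator, mul_sum, mul_sum,
    ← sum_add_distrib, ← sum_add_distrib]
  refine sum_congr rfl fun π _ => ?_
  simp only [Fintype.sum_bool, pos_iff, desB_eq]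
  by_cases h1 : IsSimsun π
  · have hn := isSimsun_noDD π h1
    rw [sum_above_neg N _ (length_letters π) (letters_bound π) hn
        (fun j => if (j : ℤ) = k then 1 else 0),
      sum_above_pos N _ (length_letters π) (letters_bound π) hn
        (fun j => if (j : ℤ) = k then 1 else 0)]
    generalize desL 0 (letters π) = d
    push_cast
    have hd : ((d : ℤ) + 1 = k) ↔ (d : ℤ) = k - 1 := by omega
    simp only [hd, h1, true_and]
    by_cases h2 : IsEvenSigned π <;> by_cases h4 : (d : ℤ) = k <;>
      by_cases h5 : (d : ℤ) = k - 1 <;> simp [h2, h4, h5] <;> omega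
  · simp [h1]

/-- For all integers `n ≥ 1`, `k ≥ 0`:
`D⁺(n,k) = k·R⁺(n−1,k) + (n−2k+1)·R⁺(n−1,k−1) + D(n−1,k)`. -/
theorem stmt7 (n : ℕ) (hn : 1 ≤ n) (k : ℤ) (hk : 0 ≤ k) :
    Dpcnt n k =
      k * Rpcnt (n - 1) k + ((n : ℤ) - 2 * k + 1) * Rpcnt (n - 1) (k - 1) +
        Dcnt (n - 1) k := by
  obtain ⟨N, rfl⟩ := Nat.exists_eq_add_of_le' hn
  rw [Dpcnt_succ, Nat.add_sub_cancel]
  push_cast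
  ring
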